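/- arXiv:2411.16040 — 8 statements merged into one kernel-verified Lean document; each statement's English description precedes it below -/
import Mathlib

section
/- Let (H, G, t, Φ) be a crossed module of groups. Define on H × H the multiplication (p, q)·(r, s) = (p·r, q·p·s·p⁻¹) and on G × G the multiplication (a, b)·(c, d) = (a·c, b·a·d·a⁻¹), and define Φ̃((a, b))(p, q) = (Φ(a)(p), Φ(b·a)(q·p)·(Φ(a)(p))⁻¹). Then (H⋉H, G⋉G, (t, t), Φ̃) is a crossed module of groups; that is: H × H and G × G with these multiplications are groups, each Φ̃((a, b)) is an automorphism of H⋉H, the map (a, b) ↦ Φ̃((a, b)) is a group homomorphism from G⋉G to Aut(H⋉H), the map (t, t)(p, q) = (t(p), t(q)) is a group homomorphism from H⋉H to G⋉G, and for all (a, b) ∈ G⋉G and (p, q), (r, s) ∈ H⋉H one has Φ̃((t, t)(p, q))(r, s) = (p, q)·(r, s)·(p, q)⁻¹ and (t, t)(Φ̃((a, b))(p, q)) = (a, b)·(t, t)(p, q)·(a, b)⁻¹. -/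
/-- A crossed module of groups: `t : H → G` a group homomorphism, `Φ` an action of `G` on `H`
by automorphisms (a group homomorphism `G → Aut(H)`), satisfying the Peiffer identity and
equivariance. -/
structure IsCrossedModule {H G : Type*} [Group H] [Group G]
    (t : H → G) (Φ : G → H → H) : Prop where
  t_mul : ∀ p q : H, t (p * q) = t p * t q
  Φ_mul_hom : ∀ (a : G) (p q : H), Φ a (p * q) = Φ a p * Φ a q
  Φ_bij : ∀ a : G, Function.Bijective (Φ a)
  Φ_one : ∀ p : H, Φ 1 p = p
  Φ_mul : ∀ (a b : G) (p : H), Φ (a * b) p = Φ a (Φ b p)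
  peiffer : ∀ p q : H, Φ (t p) q = p * q * p⁻¹
  equivar : ∀ (a : G) (p : H), t (Φ a p) = a * t p * a⁻¹

/-- The semidirect-product style multiplication `(p,q)·(r,s) = (p·r, q·p·s·p⁻¹)` on `X × X`. -/
def sdMul {X : Type*} [Group X] (z w : X × X) : X × X :=
  (z.1 * w.1, z.2 * z.1 * w.2 * z.1⁻¹)

/-- The inverse for `sdMul`. -/
def sdInv {X : Type*} [Group X] (z : X × X) : X × X :=
  (z.1⁻¹, z.1⁻¹ * z.2⁻¹ * z.1)

/-- The action `Φ̃((a,b))(p,q) = (Φ(a)p, Φ(b·a)(q·p)·(Φ(a)p)⁻¹)`. -/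
def PhiT {H G : Type*} [Group H] [Group G] (Φ : G → H → H)
    (a : G × G) (z : H × H) : H × H :=
  (Φ a.1 z.1, Φ (a.2 * a.1) (z.2 * z.1) * (Φ a.1 z.1)⁻¹)

/-!
The shear `(p, q) ↦ (p, q * p)` is an isomorphism from `X ⋉ X` onto the direct product `X × X`.
It is compatible with `(t, t)` and turns `Φ̃` into the componentwise action of `G × G` on `H × H`.
Hence `(H ⋉ H, G ⋉ G, (t, t), Φ̃)` is the product of the crossed module `(H, G, t, Φ)` with itself,
transported along the shear.
-/

section Shear

variable {X Y : Type*} [Group X] [Group Y]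

/-- The shear `(p, q) ↦ (p, q * p)`, which identifies the group `X ⋉ X` with the direct product
`X × X`. It is only an `Equiv`, since `X ⋉ X` is encoded by operations on the type `X × X`, whose
`Group` instance is that of the direct product. -/
def sdShear : X × X ≃ X × X :=
  (Equiv.refl X).prodShear Equiv.mulRight

theorem sdShear_apply (z : X × X) : sdShear z = (z.1, z.2 * z.1) :=
  rfl

theorem sdShear_one : sdShear (1, 1) = (1 : X × X) := by
  simp [sdShear_apply]

theorem sdShear_sdMul (z w : X × X) : sdShear (sdMul z w) = sdShear z * sdShear w := by
  simp [sdShear_apply, sdMul, mul_assoc]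

theorem sdShear_sdInv (z : X × X) : sdShear (sdInv z) = (sdShear z)⁻¹ := by
  simp [sdShear_apply, sdInv, mul_assoc]

theorem sdShear_prodMap {f : X → Y} (hf : ∀ x y, f (x * y) = f x * f y) (z : X × X) :
    sdShear (Prod.map f f z) = Prod.map f f (sdShear z) := by
  simp [sdShear_apply, hf]

theorem sdMul_assoc (x y z : X × X) : sdMul (sdMul x y) z = sdMul x (sdMul y z) :=
  sdShear.injective <| by simp only [sdShear_sdMul, mul_assoc]

theorem one_sdMul (x : X × X) : sdMul (1, 1) x = x :=
  sdShear.injective <| by rw [sdShear_sdMul, sdShear_one, one_mul]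

theorem sdMul_one (x : X × X) : sdMul x (1, 1) = x :=
  sdShear.injective <| by rw [sdShear_sdMul, sdShear_one, mul_one]

theorem sdInv_sdMul_self (x : X × X) : sdMul (sdInv x) x = (1, 1) :=
  sdShear.injective <| by rw [sdShear_sdMul, sdShear_sdInv, sdShear_one, inv_mul_cancel]

theorem sdMul_sdInv_self (x : X × X) : sdMul x (sdInv x) = (1, 1) :=
  sdShear.injective <| by rw [sdShear_sdMul, sdShear_sdInv, sdShear_one, mul_inv_cancel]

theorem prodMap_sdMul {f : X → Y} (hf : ∀ x y, f (x * y) = f x * f y) (z w : X × X) :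
    Prod.map f f (sdMul z w) = sdMul (Prod.map f f z) (Prod.map f f w) :=
  sdShear.injective <| by
    simp only [sdShear_prodMap hf, sdShear_sdMul]
    exact Prod.ext (hf _ _) (hf _ _)

end Shear

/-- The componentwise action of `G × G'` on `H × H'` given by `Φ` and `Φ'`; it is the action of
the product of two crossed modules. -/
def prodAction {G G' H H' : Type*} (Φ : G → H → H) (Φ' : G' → H' → H') (a : G × G') :
    H × H' → H × H' :=
  Prod.map (Φ a.1) (Φ' a.2)

theorem sdShear_PhiT {H G : Type*} [Group H] [Group G] (Φ : G → H → H) (a : G × G) (z : H × H) :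
    sdShear (PhiT Φ a z) = prodAction Φ Φ (sdShear a) (sdShear z) := by
  simp [sdShear_apply, PhiT, prodAction]

namespace IsCrossedModule

variable {H G : Type*} [Group H] [Group G] {t : H → G} {Φ : G → H → H}

theorem prod {H' G' : Type*} [Group H'] [Group G'] {t' : H' → G'} {Φ' : G' → H' → H'}
    (h : IsCrossedModule t Φ) (h' : IsCrossedModule t' Φ') :
    IsCrossedModule (Prod.map t t') (prodAction Φ Φ') where
  t_mul p q := Prod.ext (h.t_mul p.1 q.1) (h'.t_mul p.2 q.2)
  Φ_mul_hom a p q := Prod.ext (h.Φ_mul_hom a.1 p.1 q.1) (h'.Φ_mul_hom a.2 p.2 q.2)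
  Φ_bij a := (h.Φ_bij a.1).prodMap (h'.Φ_bij a.2)
  Φ_one p := Prod.ext (h.Φ_one p.1) (h'.Φ_one p.2)
  Φ_mul a b p := Prod.ext (h.Φ_mul a.1 b.1 p.1) (h'.Φ_mul a.2 b.2 p.2)
  peiffer p q := Prod.ext (h.peiffer p.1 q.1) (h'.peiffer p.2 q.2)
  equivar a p := Prod.ext (h.equivar a.1 p.1) (h'.equivar a.2 p.2)

theorem PhiT_bijective (h : IsCrossedModule t Φ) (a : G × G) : Function.Bijective (PhiT Φ a) := by
  have shear_comp : sdShear ∘ PhiT Φ a = prodAction Φ Φ (sdShear a) ∘ sdShear :=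
    funext (sdShear_PhiT Φ a)
  rw [← sdShear.comp_bijective, shear_comp]
  exact ((h.prod h).Φ_bij _).comp sdShear.bijective

theorem PhiT_apply_sdMul (h : IsCrossedModule t Φ) (a : G × G) (z w : H × H) :
    PhiT Φ a (sdMul z w) = sdMul (PhiT Φ a z) (PhiT Φ a w) :=
  sdShear.injective <| by simp only [sdShear_PhiT, sdShear_sdMul, (h.prod h).Φ_mul_hom]

theorem PhiT_sdMul_apply (h : IsCrossedModule t Φ) (a b : G × G) (z : H × H) :
    PhiT Φ (sdMul a b) z = PhiT Φ a (PhiT Φ b z) :=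
  sdShear.injective <| by simp only [sdShear_PhiT, sdShear_sdMul, (h.prod h).Φ_mul]

theorem PhiT_prodMap_apply (h : IsCrossedModule t Φ) (z w : H × H) :
    PhiT Φ (Prod.map t t z) w = sdMul (sdMul z w) (sdInv z) :=
  sdShear.injective <| by
    simp only [sdShear_PhiT, sdShear_prodMap h.t_mul, sdShear_sdMul, sdShear_sdInv,
      (h.prod h).peiffer]

theorem prodMap_PhiT (h : IsCrossedModule t Φ) (a : G × G) (z : H × H) :
    Prod.map t t (PhiT Φ a z) = sdMul (sdMul a (Prod.map t t z)) (sdInv a) :=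
  sdShear.injective <| by
    simp only [sdShear_PhiT, sdShear_prodMap h.t_mul, sdShear_sdMul, sdShear_sdInv,
      (h.prod h).equivar]

end IsCrossedModule

theorem stmt0 {H G : Type*} [Group H] [Group G] (t : H → G) (Φ : G → H → H)
    (hcm : IsCrossedModule t Φ) :
    -- (H ⋉ H, sdMul) is a group
    (∀ x y z : H × H, sdMul (sdMul x y) z = sdMul x (sdMul y z)) ∧
    (∀ x : H × H, sdMul (1, 1) x = x) ∧
    (∀ x : H × H, sdMul x (1, 1) = x) ∧
    (∀ x : H × H, sdMul (sdInv x) x = (1, 1) ∧ sdMul x (sdInv x) = (1, 1)) ∧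
    -- (G ⋉ G, sdMul) is a group
    (∀ x y z : G × G, sdMul (sdMul x y) z = sdMul x (sdMul y z)) ∧
    (∀ x : G × G, sdMul (1, 1) x = x) ∧
    (∀ x : G × G, sdMul x (1, 1) = x) ∧
    (∀ x : G × G, sdMul (sdInv x) x = (1, 1) ∧ sdMul x (sdInv x) = (1, 1)) ∧
    -- each Φ̃((a,b)) is an automorphism of H ⋉ H
    (∀ a : G × G, Function.Bijective (PhiT Φ a)) ∧
    (∀ (a : G × G) (z w : H × H),
      PhiT Φ a (sdMul z w) = sdMul (PhiT Φ a z) (PhiT Φ a w)) ∧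
    -- (a,b) ↦ Φ̃((a,b)) is a group homomorphism from G ⋉ G to Aut(H ⋉ H)
    (∀ (a b : G × G) (z : H × H), PhiT Φ (sdMul a b) z = PhiT Φ a (PhiT Φ b z)) ∧
    -- (t,t) is a group homomorphism from H ⋉ H to G ⋉ G
    (∀ z w : H × H,
      (t (sdMul z w).1, t (sdMul z w).2) = sdMul (t z.1, t z.2) (t w.1, t w.2)) ∧
    -- Peiffer identity
    (∀ z w : H × H, PhiT Φ (t z.1, t z.2) w = sdMul (sdMul z w) (sdInv z)) ∧
    -- equivariance
    (∀ (a : G × G) (z : H × H),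
      (t (PhiT Φ a z).1, t (PhiT Φ a z).2) = sdMul (sdMul a (t z.1, t z.2)) (sdInv a)) :=
  ⟨sdMul_assoc, one_sdMul, sdMul_one, fun x => ⟨sdInv_sdMul_self x, sdMul_sdInv_self x⟩,
    sdMul_assoc, one_sdMul, sdMul_one, fun x => ⟨sdInv_sdMul_self x, sdMul_sdInv_self x⟩,
    hcm.PhiT_bijective, hcm.PhiT_apply_sdMul, hcm.PhiT_sdMul_apply, prodMap_sdMul hcm.t_mul,
    hcm.PhiT_prodMap_apply, hcm.prodMap_PhiT⟩
end

section
/- Let (H, G, t, Φ) be a crossed module of groups and let 𝓑₁ : H → H and 𝓑₀ : G → G be maps. Then (𝓑₁, 𝓑₀) is a Rota-Baxter operator on (H, G, t, Φ) if and only if the following hold: (1) the graph Gr(𝓑₁) = {(𝓑₁(p), p) : p ∈ H} is a subgroup of H⋉H (the group H × H with multiplication (p, q)·(r, s) = (p·r, q·p·s·p⁻¹)); (2) the graph Gr(𝓑₀) = {(𝓑₀(a), a) : a ∈ G} is a subgroup of G⋉G (defined analogously); (3) (t, t) maps Gr(𝓑₁) into Gr(𝓑₀); (4) for every (𝓑₀(a),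 a) ∈ Gr(𝓑₀) the automorphism Φ̃((𝓑₀(a), a)), where Φ̃((a, b))(p, q) = (Φ(a)(p), Φ(b·a)(q·p)·(Φ(a)(p))⁻¹), maps Gr(𝓑₁) into Gr(𝓑₁). -/
/-- Rota-Baxter operator on a group. -/
def IsRotaBaxter {G : Type*} [Group G] (B : G → G) : Prop :=
  ∀ a b : G, B a * B b = B (a * B a * b * (B a)⁻¹)

/-- Rota-Baxter operator on a crossed module of groups. -/
structure IsCMRotaBaxter {H G : Type*} [Group H] [Group G]
    (t : H → G) (Φ : G → H → H) (B₁ : H → H) (B₀ : G → G) : Prop where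
  rb₁ : IsRotaBaxter B₁
  rb₀ : IsRotaBaxter B₀
  t_comm : ∀ p : H, t (B₁ p) = B₀ (t p)
  compat : ∀ (a : G) (p : H),
    Φ (B₀ a) (B₁ p) = B₁ (Φ (a * B₀ a) (p * B₁ p) * (Φ (B₀ a) (B₁ p))⁻¹)

/-- The graph `{(B p, p)}` of a map `B`. -/
def Gr {X : Type*} (B : X → X) : Set (X × X) := {z | z.1 = B z.2}

/-!
Elements of a graph are determined by their second coordinate, so each condition on a graph is an
identity in the group: closure under `sdMul` is the Rota-Baxter equation, `(t, t)` preserves graphs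
exactly when `t` intertwines the operators, and `Φ̃` does exactly when the compatibility condition
holds. The unit and the inverses in a graph come for free: taking `a = b = 1` in the Rota-Baxter
equation gives `B 1 = 1`, and taking `b = (B a)⁻¹ * a⁻¹ * B a` makes its right-hand side `B 1`.
-/

/-- The pairs of `S` form a subgroup of the semidirect product `X ⋉ X` with multiplication `sdMul`.
This is a predicate on sets rather than a `Subgroup (X × X)`, because the group instance on `X × X`
is the componentwise one. -/
def IsSdSubgroup {X : Type*} [Group X] (S : Set (X × X)) : Prop :=
  (1, 1) ∈ S ∧ (∀ z w : X × X, z ∈ S → w ∈ S → sdMul z w ∈ S) ∧ ∀ z : X × X, z ∈ S → sdInv z ∈ S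

theorem forall_mem_Gr {X : Type*} {B : X → X} {P : X × X → Prop} :
    (∀ z ∈ Gr B, P z) ↔ ∀ x, P (B x, x) := by
  refine ⟨fun h x => h (B x, x) rfl, ?_⟩
  rintro h ⟨_, x⟩ (rfl : _ = B x)
  exact h x

theorem mapsTo_Gr_iff {X Y : Type*} {f : X × X → Y × Y} {B : X → X} {C : Y → Y} :
    Set.MapsTo f (Gr B) (Gr C) ↔ ∀ x, (f (B x, x)).1 = C (f (B x, x)).2 :=
  forall_mem_Gr

section RotaBaxter

variable {X : Type*} [Group X] {B : X → X}

theorem IsRotaBaxter.map_one (hB : IsRotaBaxter B) : B 1 = 1 := by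
  simpa using hB 1 1

theorem IsRotaBaxter.map_inv_conj (hB : IsRotaBaxter B) (a : X) :
    B ((B a)⁻¹ * a⁻¹ * B a) = (B a)⁻¹ := by
  refine eq_inv_of_mul_eq_one_right ?_
  calc B a * B ((B a)⁻¹ * a⁻¹ * B a)
      = B (a * B a * ((B a)⁻¹ * a⁻¹ * B a) * (B a)⁻¹) := hB a _
    _ = B 1 := by simp [mul_assoc]
    _ = 1 := hB.map_one

theorem isRotaBaxter_iff_sdMul_mem_Gr :
    IsRotaBaxter B ↔ ∀ z w : X × X, z ∈ Gr B → w ∈ Gr B → sdMul z w ∈ Gr B := by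
  constructor
  · rintro hB ⟨_, a⟩ ⟨_, b⟩ (rfl : _ = B a) (rfl : _ = B b)
    exact hB a b
  · intro hmul a b
    exact hmul (B a, a) (B b, b) rfl rfl

theorem IsRotaBaxter.sdInv_mem_Gr (hB : IsRotaBaxter B) : ∀ z ∈ Gr B, sdInv z ∈ Gr B :=
  forall_mem_Gr.2 fun a => (hB.map_inv_conj a).symm

theorem isRotaBaxter_iff_isSdSubgroup_Gr : IsRotaBaxter B ↔ IsSdSubgroup (Gr B) :=
  ⟨fun hB => ⟨hB.map_one.symm, isRotaBaxter_iff_sdMul_mem_Gr.1 hB, hB.sdInv_mem_Gr⟩,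
    fun hGr => isRotaBaxter_iff_sdMul_mem_Gr.2 hGr.2.1⟩

end RotaBaxter

theorem mapsTo_prodMap_Gr_iff_semiconj {X Y : Type*} {t : X → Y} {B : X → X} {C : Y → Y} :
    Set.MapsTo (Prod.map t t) (Gr B) (Gr C) ↔ Function.Semiconj t B C :=
  mapsTo_Gr_iff

theorem mapsTo_PhiT_Gr_iff {H G : Type*} [Group H] [Group G] {Φ : G → H → H} {g : G × G}
    {B : H → H} :
    Set.MapsTo (PhiT Φ g) (Gr B) (Gr B) ↔
      ∀ p, Φ g.1 (B p) = B (Φ (g.2 * g.1) (p * B p) * (Φ g.1 (B p))⁻¹) :=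
  mapsTo_Gr_iff

theorem stmt1_general {H G : Type*} [Group H] [Group G] (t : H → G) (Φ : G → H → H)
    (B₁ : H → H) (B₀ : G → G) :
    IsCMRotaBaxter t Φ B₁ B₀ ↔
      IsSdSubgroup (Gr B₁) ∧ IsSdSubgroup (Gr B₀) ∧
        Set.MapsTo (Prod.map t t) (Gr B₁) (Gr B₀) ∧
        ∀ a, Set.MapsTo (PhiT Φ (B₀ a, a)) (Gr B₁) (Gr B₁) := by
  simp only [← isRotaBaxter_iff_isSdSubgroup_Gr, mapsTo_prodMap_Gr_iff_semiconj,
    mapsTo_PhiT_Gr_iff]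
  exact ⟨fun ⟨rb₁, rb₀, t_comm, compat⟩ => ⟨rb₁, rb₀, t_comm, compat⟩,
    fun ⟨rb₁, rb₀, t_comm, compat⟩ => ⟨rb₁, rb₀, t_comm, compat⟩⟩

theorem stmt1 {H G : Type*} [Group H] [Group G] (t : H → G) (Φ : G → H → H)
    (hcm : IsCrossedModule t Φ) (B₁ : H → H) (B₀ : G → G) :
    IsCMRotaBaxter t Φ B₁ B₀ ↔
      -- (1) Gr(B₁) is a subgroup of H ⋉ H
      (((1, 1) ∈ Gr B₁) ∧
        (∀ z w : H × H, z ∈ Gr B₁ → w ∈ Gr B₁ → sdMul z w ∈ Gr B₁) ∧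
        (∀ z : H × H, z ∈ Gr B₁ → sdInv z ∈ Gr B₁)) ∧
      -- (2) Gr(B₀) is a subgroup of G ⋉ G
      (((1, 1) ∈ Gr B₀) ∧
        (∀ z w : G × G, z ∈ Gr B₀ → w ∈ Gr B₀ → sdMul z w ∈ Gr B₀) ∧
        (∀ z : G × G, z ∈ Gr B₀ → sdInv z ∈ Gr B₀)) ∧
      -- (3) (t,t) maps Gr(B₁) into Gr(B₀)
      (∀ z : H × H, z ∈ Gr B₁ → (t z.1, t z.2) ∈ Gr B₀) ∧
      -- (4) Φ̃((B₀ a, a)) maps Gr(B₁) into Gr(B₁)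
      (∀ (a : G) (z : H × H), z ∈ Gr B₁ → PhiT Φ (B₀ a, a) z ∈ Gr B₁) :=
  stmt1_general t Φ B₁ B₀
end

section
/- Let (𝓑₁, 𝓑₀) be a Rota-Baxter operator on a crossed module of groups (H, G, t, Φ). Define p ·_{𝓑₁} q = p·𝓑₁(p)·q·𝓑₁(p)⁻¹ on H and Φ̂(a)(p) = Φ(a·𝓑₀(a))(p·𝓑₁(p)) · (Φ(𝓑₀(a))(𝓑₁(p)))⁻¹ for a ∈ G, p ∈ H. Then for all a ∈ G and p, q ∈ H, Φ̂(a)(p ·_{𝓑₁} q) = Φ̂(a)(p) ·_{𝓑₁} Φ̂(a)(q). -/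
/-- The descended multiplication `p ·_B q = p · B(p) · q · B(p)⁻¹`. -/
def mulB {X : Type*} [Group X] (B : X → X) (p q : X) : X := p * B p * q * (B p)⁻¹

/-- The descended action `Φ̂(a)(p) = Φ(a·B₀(a))(p·B₁(p)) · (Φ(B₀(a))(B₁(p)))⁻¹`. -/
def hatPhi {H G : Type*} [Group H] [Group G] (Φ : G → H → H)
    (B₁ : H → H) (B₀ : G → G) (a : G) (p : H) : H :=
  Φ (a * B₀ a) (p * B₁ p) * (Φ (B₀ a) (B₁ p))⁻¹

/-!
For a Rota-Baxter operator `B`, both `B` and `p ↦ p * B p` are multiplicative from the descended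
multiplication to the original one, and together they determine `p`. Under this pair of maps,
`Φ̂(a)` becomes the pair of endomorphisms `Φ(B₀(a))` and `Φ(a * B₀(a))`, so it is multiplicative.
-/

namespace IsRotaBaxter

variable {X Y : Type*} [Group X] [Group Y] {B : X → X} {C : Y → Y}

theorem map_mulB (hB : IsRotaBaxter B) (p q : X) : B (mulB B p q) = B p * B q :=
  (hB p q).symm

theorem mulB_mul_map_mulB (hB : IsRotaBaxter B) (p q : X) :
    mulB B p q * B (mulB B p q) = (p * B p) * (q * B q) := by
  rw [hB.map_mulB, mulB]
  group

theorem map_mulB_of_intertwines (hB : IsRotaBaxter B) (hC : IsRotaBaxter C) {f : X → Y}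
    (φ ψ : X →* Y) (hφ : ∀ p, C (f p) = φ (B p)) (hψ : ∀ p, f p * C (f p) = ψ (p * B p))
    (p q : X) : f (mulB B p q) = mulB C (f p) (f q) := by
  have h_op : C (f (mulB B p q)) = C (mulB C (f p) (f q)) := by
    rw [hφ, hB.map_mulB, map_mul, hC.map_mulB, hφ, hφ]
  have h_mul_op : f (mulB B p q) * C (f (mulB B p q)) =
      mulB C (f p) (f q) * C (mulB C (f p) (f q)) := by
    rw [hψ, hB.mulB_mul_map_mulB, map_mul, hC.mulB_mul_map_mulB, hψ, hψ]
  rw [h_op] at h_mul_op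
  exact mul_right_cancel h_mul_op

end IsRotaBaxter

theorem stmt2_general {H G : Type*} [Group H] [Group G] {Φ : G → H → H} {B₁ : H → H}
    {B₀ : G → G} (hΦ : ∀ (a : G) (p q : H), Φ a (p * q) = Φ a p * Φ a q)
    (hB₁ : IsRotaBaxter B₁)
    (h_compat : ∀ (a : G) (p : H), Φ (B₀ a) (B₁ p) = B₁ (hatPhi Φ B₁ B₀ a p))
    (a : G) (p q : H) :
    hatPhi Φ B₁ B₀ a (mulB B₁ p q) =
      mulB B₁ (hatPhi Φ B₁ B₀ a p) (hatPhi Φ B₁ B₀ a q) := by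
  have h_mul_op (x : H) :
      hatPhi Φ B₁ B₀ a x * B₁ (hatPhi Φ B₁ B₀ a x) = Φ (a * B₀ a) (x * B₁ x) := by
    rw [← h_compat, hatPhi, inv_mul_cancel_right]
  exact hB₁.map_mulB_of_intertwines hB₁
    (MonoidHom.mk' (Φ (B₀ a)) (hΦ (B₀ a))) (MonoidHom.mk' (Φ (a * B₀ a)) (hΦ (a * B₀ a)))
    (fun x ↦ (h_compat a x).symm) h_mul_op p q

theorem stmt2 {H G : Type*} [Group H] [Group G] (t : H → G) (Φ : G → H → H)
    (B₁ : H → H) (B₀ : G → G) (hcm : IsCrossedModule t Φ)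
    (hrb : IsCMRotaBaxter t Φ B₁ B₀) :
    ∀ (a : G) (p q : H),
      hatPhi Φ B₁ B₀ a (mulB B₁ p q)
        = mulB B₁ (hatPhi Φ B₁ B₀ a p) (hatPhi Φ B₁ B₀ a q) :=
  stmt2_general hcm.Φ_mul_hom hrb.rb₁ hrb.compat
end

section
/- Let (𝓑₁, 𝓑₀) be a Rota-Baxter operator on a crossed module of groups (H, G, t, Φ). On G × H define the semidirect product multiplication (a, p) ·_Φ (b, q) = (a·b, p·Φ(a)(q)), and define 𝓑(a, p) = (𝓑₀(a), 𝓓(a, p)) where 𝓓(a, p) = Φ(𝓑₀(a))(𝓑₁(Φ(𝓑₀(a)⁻¹·a⁻¹)(p))). Then 𝓑 is a Rota-Baxter operator on the group (G ⋉_Φ H, ·_Φ); that is, 𝓑(a, p) ·_Φ 𝓑(b, q) = 𝓑((a, p) ·_Φ 𝓑(a, p) ·_Φ (b, q) ·_Φ 𝓑(a, p)⁻¹) for all (a, p), (b, q) ∈ G × H. -/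
/-- The semidirect product multiplication `(a,p)·_Φ(b,q) = (a·b, p·Φ(a)q)` on `G × H`. -/
def sdpMul {H G : Type*} [Group H] [Group G] (Φ : G → H → H) (m n : G × H) : G × H :=
  (m.1 * n.1, m.2 * Φ m.1 n.2)

/-- The inverse for `sdpMul`. -/
def sdpInv {H G : Type*} [Group H] [Group G] (Φ : G → H → H) (m : G × H) : G × H :=
  (m.1⁻¹, Φ m.1⁻¹ m.2⁻¹)

/-- The operator `𝓑(a,p) = (B₀(a), Φ(B₀(a))(B₁(Φ(B₀(a)⁻¹·a⁻¹)(p))))` on `G ⋉_Φ H`. -/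
def Bcal {H G : Type*} [Group H] [Group G] (Φ : G → H → H)
    (B₁ : H → H) (B₀ : G → G) (m : G × H) : G × H :=
  (B₀ m.1, Φ (B₀ m.1) (B₁ (Φ ((B₀ m.1)⁻¹ * m.1⁻¹) m.2)))

/-!
A map `B` on a group `K` is recorded by its graph `{(a * B a, B a)} ⊆ K × K`, from which `a` is
recovered as the quotient of the two coordinates. Multiplying two points of the graph shows that
`B` is a Rota-Baxter operator exactly when the graph is closed under multiplication, and then the
graph is even a subgroup. For `K = H ⋊[φ] G`, the graph of the operator in question is the product
of the graphs of `B₀` and `B₁`, and the compatibility condition says that the graph of `B₀`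
normalizes the graph of `B₁`. A product of two subgroups, one normalizing the other, is a subgroup.
-/

section Graph

variable {G : Type*} [Group G] {B : G → G}

/-- The graph of a map `B` on a group, sheared so that `B` is a Rota-Baxter operator if and only if
its graph is a subgroup of `G × G`. -/
def rotaBaxterGraph (B : G → G) : Set (G × G) :=
  Set.range fun a ↦ (a * B a, B a)

theorem mem_rotaBaxterGraph {u : G × G} : u ∈ rotaBaxterGraph B ↔ B (u.1 * u.2⁻¹) = u.2 := by
  constructor
  · rintro ⟨a, rfl⟩
    simp only [mul_inv_cancel_right]
  · intro hu
    exact ⟨u.1 * u.2⁻¹, Prod.ext (by simp only [hu, inv_mul_cancel_right]) hu⟩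

theorem isRotaBaxter_iff_mul_mem_graph :
    IsRotaBaxter B ↔
      ∀ u ∈ rotaBaxterGraph B, ∀ v ∈ rotaBaxterGraph B, u * v ∈ rotaBaxterGraph B := by
  have mul_mem_iff (a b : G) :
      (a * B a, B a) * (b * B b, B b) ∈ rotaBaxterGraph B ↔
        B a * B b = B (a * B a * b * (B a)⁻¹) := by
    have quotient : a * B a * (b * B b) * (B a * B b)⁻¹ = a * B a * b * (B a)⁻¹ := by group
    rw [mem_rotaBaxterGraph, Prod.mk_mul_mk, quotient, eq_comm]
  constructor
  · rintro hB _ ⟨a, rfl⟩ _ ⟨b, rfl⟩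
    exact (mul_mem_iff a b).2 (hB a b)
  · exact fun hmul a b ↦ (mul_mem_iff a b).1 (hmul _ ⟨a, rfl⟩ _ ⟨b, rfl⟩)

namespace IsRotaBaxter

protected theorem map_one_s5 (hB : IsRotaBaxter B) : B 1 = 1 := by
  simpa only [one_mul, mul_one, mul_inv_cancel, mul_eq_left] using hB 1 1

theorem inv_mem_graph (hB : IsRotaBaxter B) {u : G × G} (hu : u ∈ rotaBaxterGraph B) :
    u⁻¹ ∈ rotaBaxterGraph B := by
  obtain ⟨a, rfl⟩ := hu
  have cancel : B a * B ((a * B a)⁻¹ * B a) = 1 := by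
    have conj : a * B a * ((a * B a)⁻¹ * B a) * (B a)⁻¹ = 1 := by group
    rw [hB, conj, hB.map_one_s5]
  simpa only [mem_rotaBaxterGraph, Prod.fst_inv, Prod.snd_inv, inv_inv]
    using eq_inv_of_mul_eq_one_right cancel

/-- The graph of a Rota-Baxter operator, as a subgroup of `G × G`. -/
def graph (hB : IsRotaBaxter B) : Subgroup (G × G) where
  carrier := rotaBaxterGraph B
  mul_mem' hu hv := isRotaBaxter_iff_mul_mem_graph.1 hB _ hu _ hv
  one_mem' := mem_rotaBaxterGraph.2 (by simpa using hB.map_one_s5)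
  inv_mem' := hB.inv_mem_graph

theorem of_coe_eq_graph {S : Subgroup (G × G)} (hS : (S : Set (G × G)) = rotaBaxterGraph B) :
    IsRotaBaxter B := by
  rw [isRotaBaxter_iff_mul_mem_graph, ← hS]
  exact fun _ hu _ hv ↦ S.mul_mem hu hv

end IsRotaBaxter

end Graph

section Semidirect

open SemidirectProduct
open scoped Pointwise

variable {H G : Type*} [Group H] [Group G] {φ : G →* MulAut H}

/-- The operator on `H ⋊[φ] G` obtained from maps `B₁` on `H` and `B₀` on `G`. It is `Bcal` with
the two coordinates swapped, since Mathlib writes the normal factor first. -/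
def semidirectRotaBaxter (φ : G →* MulAut H) (B₁ : H → H) (B₀ : G → G) (m : H ⋊[φ] G) :
    H ⋊[φ] G :=
  ⟨φ (B₀ m.right) (B₁ (φ ((B₀ m.right)⁻¹ * m.right⁻¹) m.left)), B₀ m.right⟩

theorem rotaBaxterGraph_semidirectRotaBaxter (B₁ : H → H) (B₀ : G → G) :
    rotaBaxterGraph (semidirectRotaBaxter φ B₁ B₀) =
      inr.prodMap inr '' rotaBaxterGraph B₀ * inl.prodMap inl '' rotaBaxterGraph B₁ := by
  have graph_point (a : G) (p : H) :
      let m : H ⋊[φ] G := ⟨φ (a * B₀ a) p, a⟩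
      (inr (a * B₀ a) * inl (p * B₁ p), inr (B₀ a) * inl (B₁ p)) =
        (m * semidirectRotaBaxter φ B₁ B₀ m, semidirectRotaBaxter φ B₁ B₀ m) := by
    ext <;> simp [semidirectRotaBaxter]
  ext w
  constructor
  · rintro ⟨⟨p, a⟩, rfl⟩
    obtain ⟨p, rfl⟩ := (φ (a * B₀ a)).surjective p
    exact ⟨_, ⟨_, ⟨a, rfl⟩, rfl⟩, _, ⟨_, ⟨p, rfl⟩, rfl⟩, graph_point a p⟩
  · rintro ⟨_, ⟨_, ⟨a, rfl⟩, rfl⟩, _, ⟨_, ⟨p, rfl⟩, rfl⟩, rfl⟩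
    exact ⟨_, (graph_point a p).symm⟩

theorem map_inr_le_normalizer_map_inl {S : Subgroup (G × G)} {T : Subgroup (H × H)}
    (hST : ∀ g ∈ S, ∀ h ∈ T, (φ g.1 h.1, φ g.2 h.2) ∈ T) :
    S.map ((inr (φ := φ)).prodMap (inr (φ := φ))) ≤
      Subgroup.normalizer (T.map ((inl (φ := φ)).prodMap (inl (φ := φ)))) := by
  rw [Subgroup.le_normalizer_iff]
  rintro _ ⟨g, hg, rfl⟩ _ ⟨h, hh, rfl⟩
  exact ⟨_, hST g hg h hh, by simp only [MonoidHom.prodMap_def, MonoidHom.prod_apply,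
    MonoidHom.comp_apply, MonoidHom.coe_fst, MonoidHom.coe_snd, Prod.inv_mk, Prod.mk_mul_mk,
    inl_aut, map_inv]⟩

theorem stmt5_general {B₁ : H → H} {B₀ : G → G} (hB₁ : IsRotaBaxter B₁) (hB₀ : IsRotaBaxter B₀)
    (compat : ∀ (a : G) (p : H),
      φ (B₀ a) (B₁ p) = B₁ (φ (a * B₀ a) (p * B₁ p) * (φ (B₀ a) (B₁ p))⁻¹)) :
    IsRotaBaxter (semidirectRotaBaxter φ B₁ B₀) := by
  have graph_invariant : ∀ g ∈ hB₀.graph, ∀ h ∈ hB₁.graph,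
      (φ g.1 h.1, φ g.2 h.2) ∈ hB₁.graph := by
    rintro _ ⟨a, rfl⟩ _ ⟨p, rfl⟩
    exact mem_rotaBaxterGraph.2 (compat a p).symm
  apply IsRotaBaxter.of_coe_eq_graph
  rw [Subgroup.coe_mul_of_left_le_normalizer_right _ _
    (map_inr_le_normalizer_map_inl graph_invariant)]
  exact (rotaBaxterGraph_semidirectRotaBaxter B₁ B₀).symm

end Semidirect

/-- The action of a crossed module as a homomorphism into the automorphism group, as required by
Mathlib's `SemidirectProduct`. -/
noncomputable def IsCrossedModule.toMulAut {H G : Type*} [Group H] [Group G] {t : H → G}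
    {Φ : G → H → H} (hcm : IsCrossedModule t Φ) : G →* MulAut H :=
  MonoidHom.mk'
    (fun a ↦ MulEquiv.ofBijective (MonoidHom.mk' (Φ a) (hcm.Φ_mul_hom a)) (hcm.Φ_bij a))
    fun a b ↦ MulEquiv.ext (hcm.Φ_mul a b)

theorem stmt5 {H G : Type*} [Group H] [Group G] (t : H → G) (Φ : G → H → H)
    (B₁ : H → H) (B₀ : G → G) (hcm : IsCrossedModule t Φ)
    (hrb : IsCMRotaBaxter t Φ B₁ B₀) :
    ∀ m n : G × H,
      sdpMul Φ (Bcal Φ B₁ B₀ m) (Bcal Φ B₁ B₀ n)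
        = Bcal Φ B₁ B₀
            (sdpMul Φ (sdpMul Φ (sdpMul Φ m (Bcal Φ B₁ B₀ m)) n)
              (sdpInv Φ (Bcal Φ B₁ B₀ m))) := by
  intro m n
  exact congrArg (fun x ↦ (x.right, x.left))
    (stmt5_general (φ := hcm.toMulAut) hrb.rb₁ hrb.rb₀ hrb.compat ⟨m.2, m.1⟩ ⟨n.2, n.1⟩)
end

section
/- Let 𝓑 be a Rota-Baxter operator on a group G. Define R : G × G → G × G by R(a, b) = (Ad_{𝓑(a)}(b), Ad_{(𝓑(c)⁻¹)·c⁻¹}(a)) where c = Ad_{𝓑(a)}(b) and Ad_g(x) = g·x·g⁻¹. Then R is a bijection and satisfies the braid relation (R × Id)(Id × R)(R × Id) = (Id × R)(R × Id)(Id × R) as maps G × G × G → G × G × G; i.e., (G, R) is a set-theoretical solution of the Yang-Baxter equation. -/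
/-- The map `R(a,b) = (Ad_{B(a)}(b), Ad_{B(c)⁻¹·c⁻¹}(a))` with `c = Ad_{B(a)}(b)`,
where `Ad_g(x) = g·x·g⁻¹`. -/
def Rrb {G : Type*} [Group G] (B : G → G) (z : G × G) : G × G :=
  let c := B z.1 * z.2 * (B z.1)⁻¹
  let d := (B c)⁻¹ * c⁻¹
  (c, d * z.1 * d⁻¹)

/-- `R × Id` on triples. -/
def R12 {X : Type*} (R : X × X → X × X) (w : X × X × X) : X × X × X :=
  ((R (w.1, w.2.1)).1, (R (w.1, w.2.1)).2, w.2.2)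

/-- `Id × R` on triples. -/
def R23 {X : Type*} (R : X × X → X × X) (w : X × X × X) : X × X × X :=
  (w.1, R w.2)

/-!
Every rack carries the solution `(x, y) ↦ (y, y ◃⁻¹ x)`. If `γ` is a family of automorphisms of a
solution `r` and `S` is the shear `(a, b) ↦ (a, γ a b)`, then the guitar map
`(a, b, c) ↦ (a, γ a b, γ a (γ b c))` carries `R = S⁻¹ ∘ r ∘ S` acting on two adjacent entries of a
triple to `r` acting on the same entries, as soon as `γ a * γ b = γ c * γ d` whenever
`R (a, b) = (c, d)`. Being injective, it pulls the braid relation for `r` back to `R`. For a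
Rota-Baxter operator `B`, the map `Rrb B` arises in this way from the conjugation rack of the group
and `γ = Ad ∘ B`.
-/

open Function
open scoped Quandles

/-- Set-theoretical solutions of the Yang-Baxter equation, in the braid form. -/
structure IsYangBaxterSolution {X : Type*} (r : X × X → X × X) : Prop where
  bijective : Bijective r
  braid : ∀ w, R12 r (R23 r (R12 r w)) = R23 r (R12 r (R23 r w))

section Twist

variable {X : Type*}

/-- The Drinfeld twist of `r` by the family of permutations `γ`: the conjugate of `r` under the
shear `(a, b) ↦ (a, γ a b)`. -/
def shearTwist (γ : X → Equiv.Perm X) (r : X × X → X × X) : X × X → X × X :=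
  (Equiv.prodShear (Equiv.refl X) γ).symm ∘ r ∘ Equiv.prodShear (Equiv.refl X) γ

/-- The guitar map of the family of permutations `γ` on triples, which intertwines a map `r`
and its twist `shearTwist γ r`. -/
def guitarMap (γ : X → Equiv.Perm X) (w : X × X × X) : X × X × X :=
  (w.1, γ w.1 w.2.1, γ w.1 (γ w.2.1 w.2.2))

theorem guitarMap_injective (γ : X → Equiv.Perm X) : Injective (guitarMap γ) := by
  rintro ⟨a, b, c⟩ ⟨a', b', c'⟩ h
  simp only [guitarMap, Prod.mk.injEq] at h
  obtain ⟨rfl, hb, hc⟩ := h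
  obtain rfl : b = b' := (γ a).injective hb
  obtain rfl : c = c' := (γ b).injective ((γ a).injective hc)
  rfl

variable {γ : X → Equiv.Perm X} {r : X × X → X × X}

theorem prodShear_shearTwist (z : X × X) :
    Equiv.prodShear (Equiv.refl X) γ (shearTwist γ r z) = r (z.1, γ z.1 z.2) :=
  Equiv.apply_symm_apply _ _

theorem semiconj_guitarMap_R12
    (hγ : ∀ z, γ (shearTwist γ r z).1 * γ (shearTwist γ r z).2 = γ z.1 * γ z.2) :
    Semiconj (guitarMap γ) (R12 (shearTwist γ r)) (R12 r) := by
  rintro ⟨a, b, c⟩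
  obtain ⟨hfst, hsnd⟩ := Prod.ext_iff.1 (prodShear_shearTwist (γ := γ) (r := r) (a, b))
  have hthd : γ (shearTwist γ r (a, b)).1 (γ (shearTwist γ r (a, b)).2 c) = γ a (γ b c) :=
    Equiv.congr_fun (hγ (a, b)) c
  exact Prod.ext hfst (Prod.ext hsnd hthd)

theorem semiconj_guitarMap_R23 (hr : ∀ a, Semiconj (Prod.map (γ a) (γ a)) r r) :
    Semiconj (guitarMap γ) (R23 (shearTwist γ r)) (R23 r) := by
  rintro ⟨a, b, c⟩
  refine Prod.ext rfl ?_
  calc Prod.map (γ a) (γ a) (Equiv.prodShear (Equiv.refl X) γ (shearTwist γ r (b, c)))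
      = Prod.map (γ a) (γ a) (r (b, γ b c)) := by rw [prodShear_shearTwist]
    _ = r (γ a b, γ a (γ b c)) := hr a (b, γ b c)

theorem IsYangBaxterSolution.shearTwist (h : IsYangBaxterSolution r)
    (hr : ∀ a, Semiconj (Prod.map (γ a) (γ a)) r r)
    (hγ : ∀ z, γ (shearTwist γ r z).1 * γ (shearTwist γ r z).2 = γ z.1 * γ z.2) :
    IsYangBaxterSolution (shearTwist γ r) where
  bijective := (Equiv.bijective _).comp (h.bijective.comp (Equiv.bijective _))
  braid w := by
    have h₁₂ := semiconj_guitarMap_R12 hγ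
    have h₂₃ := semiconj_guitarMap_R23 hr
    apply guitarMap_injective γ
    calc guitarMap γ (R12 _ (R23 _ (R12 _ w)))
        = R12 r (R23 r (R12 r (guitarMap γ w))) := by rw [h₁₂.eq, h₂₃.eq, h₁₂.eq]
      _ = R23 r (R12 r (R23 r (guitarMap γ w))) := h.braid _
      _ = guitarMap γ (R23 _ (R12 _ (R23 _ w))) := by rw [h₂₃.eq, h₁₂.eq, h₂₃.eq]

end Twist

section Rack

/-- The solution of the Yang-Baxter equation attached to a rack. -/
def rackBraiding (X : Type*) [Rack X] (z : X × X) : X × X :=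
  (z.2, z.2 ◃⁻¹ z.1)

theorem isYangBaxterSolution_rackBraiding (X : Type*) [Rack X] :
    IsYangBaxterSolution (rackBraiding X) where
  bijective := bijective_iff_has_inverse.2 ⟨fun z => (z.1 ◃ z.2, z.1),
    fun z => Prod.ext (Rack.act_invAct_eq z.2 z.1) rfl,
    fun z => Prod.ext rfl (Rack.invAct_act_eq z.1 z.2)⟩
  braid w := by
    simp only [R12, R23, rackBraiding, ← Rack.self_distrib_inv]

theorem shelfHom_map_invAct {X Y : Type*} [Rack X] [Rack Y] (f : X →◃ Y) (x y : X) :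
    f (x ◃⁻¹ y) = f x ◃⁻¹ f y := by
  rw [← Rack.left_cancel (f x), ← f.map_act, Rack.act_invAct_eq, Rack.act_invAct_eq]

theorem semiconj_rackBraiding {X Y : Type*} [Rack X] [Rack Y] (f : X →◃ Y) :
    Semiconj (Prod.map f f) (rackBraiding X) (rackBraiding Y) :=
  fun z => Prod.ext rfl (shelfHom_map_invAct f z.2 z.1)

end Rack

section GammaFunction

variable {G : Type*} [Group G]

/-- Gamma functions on a group `G`; they correspond to the skew braces with additive group `G`,
the second product being `a ∘ b = a * γ a b`. -/
def IsGammaFunction (γ : G → MulAut G) : Prop :=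
  ∀ a b, γ a * γ b = γ (a * γ a b)

/-- The braiding `(a, b) ↦ (c, (γ c)⁻¹ (c⁻¹ * a * c))`, where `c = γ a b`, of the skew brace of
a gamma function `γ`. -/
def gammaBraiding (γ : G → MulAut G) (z : G × G) : G × G :=
  let c := γ z.1 z.2
  (c, (γ c)⁻¹ (c⁻¹ * z.1 * c))

theorem gammaBraiding_eq_shearTwist (γ : G → MulAut G) :
    gammaBraiding γ = shearTwist (fun a => (γ a).toEquiv) (rackBraiding (Quandle.Conj G)) :=
  rfl

theorem IsGammaFunction.mul_gammaBraiding {γ : G → MulAut G} (hγ : IsGammaFunction γ)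
    (z : G × G) : γ (gammaBraiding γ z).1 * γ (gammaBraiding γ z).2 = γ z.1 * γ z.2 := by
  rw [hγ, hγ]
  simp only [gammaBraiding, MulAut.apply_inv_self, mul_assoc, mul_inv_cancel_left]

theorem stmt7_general {γ : G → MulAut G} (hγ : IsGammaFunction γ) :
    IsYangBaxterSolution (gammaBraiding γ) := by
  rw [gammaBraiding_eq_shearTwist]
  apply (isYangBaxterSolution_rackBraiding _).shearTwist
  · exact fun a => semiconj_rackBraiding (Quandle.Conj.map (γ a).toMonoidHom)
  · exact fun z => congrArg MulEquiv.toEquiv (hγ.mul_gammaBraiding z)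

end GammaFunction

section RotaBaxter

variable {G : Type*} [Group G] {B : G → G}

theorem IsRotaBaxter.isGammaFunction (hB : IsRotaBaxter B) :
    IsGammaFunction (MulAut.conj ∘ B) := fun a b => by
  simp only [comp_apply, ← map_mul, hB a b, MulAut.conj_apply, mul_assoc]

theorem Rrb_eq_gammaBraiding (B : G → G) : Rrb B = gammaBraiding (MulAut.conj ∘ B) := by
  funext z
  simp [Rrb, gammaBraiding, mul_assoc]

end RotaBaxter

theorem stmt7 {G : Type*} [Group G] (B : G → G) (hrb : IsRotaBaxter B) :
    Function.Bijective (Rrb B) ∧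
    ∀ w : G × G × G,
      R12 (Rrb B) (R23 (Rrb B) (R12 (Rrb B) w))
        = R23 (Rrb B) (R12 (Rrb B) (R23 (Rrb B) w)) := by
  have h : IsYangBaxterSolution (Rrb B) :=
    Rrb_eq_gammaBraiding B ▸ stmt7_general hrb.isGammaFunction
  exact ⟨h.bijective, h.braid⟩
end

section
/- Let (𝓑₁, 𝓑₀) be a Rota-Baxter operator on a crossed module of groups (H, G, t, Φ), and define R₁ and R₀ as follows: R₀(a, b) = (Ad_{𝓑₀(a)}(b), Ad_{(𝓑₀(d)⁻¹)·d⁻¹}(a)) with d = Ad_{𝓑₀(a)}(b) and Ad_g(x) = g·x·g⁻¹ in G; R₁(m, n) = (Ad_{𝓑(m)}(n), Ad_{(𝓑(c)⁻¹)·_Φ c⁻¹}(m)) with c = Ad_{𝓑(m)}(n), where Ad is conjugation in the semidirect product group (G ⋉_Φ H, ·_Φ) with (a, p) ·_Φ (b, q) = (a·b, p·Φ(a)(q)), and 𝓑(a, p) = (𝓑₀(a), Φ(𝓑₀(a))(𝓑₁(Φ(𝓑₀(a)⁻¹·a⁻¹)(p)))). Define the target map 𝔱(a, p) = t(p)·a.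 Then (𝔱 × 𝔱) ∘ R₁ = R₀ ∘ (𝔱 × 𝔱); explicitly, if R₁((a, p), (b, q)) = ((a₁, p₁), (b₁, q₁)) then (t(p₁)·a₁, t(q₁)·b₁) = R₀(t(p)·a, t(q)·b). -/
/-- The Yang-Baxter map `R(m,n) = (Ad_{B(m)}(n), Ad_{B(c)⁻¹·c⁻¹}(m))`, `c = Ad_{B(m)}(n)`,
written for an abstract multiplication `mul` and inversion `inv`. -/
def Rgen {X : Type*} (mul : X → X → X) (inv : X → X) (B : X → X) (z : X × X) : X × X :=
  let c := mul (mul (B z.1) z.2) (inv (B z.1))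
  let d := mul (inv (B c)) (inv c)
  (c, mul (mul d z.1) (inv d))

/-!
The map `Rgen mul inv B` is a word in `mul`, `inv` and `B`, so any map intertwining these three
operations intertwines the Yang-Baxter maps they define. The target map `(a, p) ↦ t p * a` is such a
map: equivariance of `t` makes it multiplicative on `G ⋉_Φ H`, and its compatibility with `𝓑` is the
Rota-Baxter identity of `B₀` at `a` and `(B₀ a)⁻¹ * a⁻¹ * t p * a * B₀ a`.
-/

theorem Rgen_semiconj {X Y : Type*} {mul : X → X → X} {inv B : X → X} {mul' : Y → Y → Y}
    {inv' B' : Y → Y} {f : X → Y} (hmul : Function.Semiconj₂ f mul mul')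
    (hinv : Function.Semiconj f inv inv') (hB : Function.Semiconj f B B') :
    Function.Semiconj (Prod.map f f) (Rgen mul inv B) (Rgen mul' inv' B') := by
  intro z
  simp only [Rgen, Prod.map_apply', hmul.eq, hinv.eq, hB.eq]

/-- The target map `𝔱` of the category associated with a crossed module, as a map from morphisms
`G × H` to objects `G`. -/
def target {H G : Type*} [Mul G] (t : H → G) (m : G × H) : G :=
  t m.2 * m.1

section Target

variable {H G : Type*} [Group H] [Group G] {Φ : G → H → H}

theorem target_sdpMul {t : H →* G} (hΦ : ∀ a p, t (Φ a p) = a * t p * a⁻¹) :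
    Function.Semiconj₂ (target t) (sdpMul Φ) (fun a b => a * b) := by
  intro m n
  simp only [target, sdpMul, map_mul, hΦ]
  group

theorem target_sdpInv {t : H →* G} (hΦ : ∀ a p, t (Φ a p) = a * t p * a⁻¹) :
    Function.Semiconj (target t) (sdpInv Φ) (fun a => a⁻¹) := by
  intro m
  simp only [target, sdpInv, map_inv, hΦ]
  group

theorem target_Bcal {t : H → G} {B₁ : H → H} {B₀ : G → G}
    (hΦ : ∀ a p, t (Φ a p) = a * t p * a⁻¹) (hB₀ : IsRotaBaxter B₀)
    (ht : Function.Semiconj t B₁ B₀) :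
    Function.Semiconj (target t) (Bcal Φ B₁ B₀) B₀ := by
  rintro ⟨a, p⟩
  let b := (B₀ a)⁻¹ * a⁻¹
  calc t (Φ (B₀ a) (B₁ (Φ b p))) * B₀ a
      = B₀ a * B₀ (b * t p * b⁻¹) := by rw [hΦ, ht.eq, hΦ, inv_mul_cancel_right]
    _ = B₀ (a * B₀ a * (b * t p * b⁻¹) * (B₀ a)⁻¹) := hB₀ _ _
    _ = B₀ (t p * a) := by congr 1; simp only [b]; group

end Target

theorem stmt10_general {H G : Type*} [Group H] [Group G] (t : H →* G) (Φ : G → H → H)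
    (B₁ : H → H) (B₀ : G → G) (hΦ : ∀ a p, t (Φ a p) = a * t p * a⁻¹)
    (hB₀ : IsRotaBaxter B₀) (ht : Function.Semiconj t B₁ B₀) :
    Function.Semiconj (Prod.map (target t) (target t))
      (Rgen (sdpMul Φ) (sdpInv Φ) (Bcal Φ B₁ B₀))
      (Rgen (fun a b : G => a * b) (fun a => a⁻¹) B₀) :=
  Rgen_semiconj (target_sdpMul hΦ) (target_sdpInv hΦ) (target_Bcal hΦ hB₀ ht)

theorem stmt10 {H G : Type*} [Group H] [Group G] (t : H → G) (Φ : G → H → H)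
    (B₁ : H → H) (B₀ : G → G) (hcm : IsCrossedModule t Φ)
    (hrb : IsCMRotaBaxter t Φ B₁ B₀) :
    ∀ z : (G × H) × (G × H),
      (t (Rgen (sdpMul Φ) (sdpInv Φ) (Bcal Φ B₁ B₀) z).1.2
          * (Rgen (sdpMul Φ) (sdpInv Φ) (Bcal Φ B₁ B₀) z).1.1,
       t (Rgen (sdpMul Φ) (sdpInv Φ) (Bcal Φ B₁ B₀) z).2.2
          * (Rgen (sdpMul Φ) (sdpInv Φ) (Bcal Φ B₁ B₀) z).2.1)
        = Rgen (fun a b : G => a * b) (fun a => a⁻¹) B₀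
            (t z.1.2 * z.1.1, t z.2.2 * z.2.1) :=
  stmt10_general (MonoidHom.mk' t hcm.t_mul) Φ B₁ B₀ hcm.equivar hrb.rb₀ hrb.t_comm
end

section
/- Let (𝓑₁, 𝓑₀) be a Rota-Baxter operator on a crossed module of groups (H, G, t, Φ). In the category associated with (H, G, t, Φ) (objects G, morphisms G × H, source 𝔰(a, p) = a, target 𝔱(a, p) = t(p)·a, and composition (a, p) ∘ (b, q) = (b, p·q) defined when t(q)·b = a), define R₁(m, n) = (Ad_{𝓑(m)}(n), Ad_{(𝓑(c)⁻¹)·_Φ c⁻¹}(m)) with c = Ad_{𝓑(m)}(n), where Ad is conjugation in the semidirect product group (G ⋉_Φ H, ·_Φ) with (a, p) ·_Φ (b, q) = (a·b, p·Φ(a)(q)) and 𝓑(a, p) = (𝓑₀(a), Φ(𝓑₀(a))(𝓑₁(Φ(𝓑₀(a)⁻¹·a⁻¹)(p)))). Suppose (e, x), (f, y), (e', x'), (f', y') ∈ G × H satisfy t(x')·e' = e and t(y')·f' = f (so that (e, x) ∘ (e', x') and (f, y) ∘ (f', y') are defined). Write R₁((e, x), (f, y)) = (m₁, m₂) and R₁((e',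 x'), (f', y')) = (m₁', m₂'). Then the composites m₁ ∘ m₁' and m₂ ∘ m₂' are defined (i.e. 𝔱(m₁') = 𝔰(m₁) and 𝔱(m₂') = 𝔰(m₂)) and R₁((e, x) ∘ (e', x'), (f, y) ∘ (f', y')) = (m₁ ∘ m₁', m₂ ∘ m₂'). -/
/-- Composition of morphisms in the category associated with a crossed module:
`(a,p) ∘ (b,q) = (b, p·q)` (defined when `t(q)·b = a`). -/
def catComp {H G : Type*} [Group H] (m n : G × H) : G × H := (n.1, m.2 * n.2)

/-!
Composition in the category associated with a crossed module is compatible with the group structure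
of `G ⋉_Φ H`, so `R₁`, being built from multiplication, inversion and `𝓑`, preserves composition as
soon as `𝓑` does. For the latter, replace the label `p` of a morphism `(a, p)` by
`u = Φ(𝓑₀(a)⁻¹a⁻¹)(p)`. With the circle product `a ⋆ b = a𝓑(a)b𝓑(a)⁻¹` of a Rota-Baxter operator,
the target of `(a, p)` becomes `a ⋆ t(u)`, and composing morphisms multiplies their labels `u` with
respect to the circle product of `𝓑₁`. Since `𝓑₀` and `𝓑₁` turn circle products into products,
`𝓑` preserves targets and composites.
-/

/-- The circle product `a ⋆ b = a · B(a) · b · B(a)⁻¹` defined by an operator `B` on a group. -/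
def circ {G : Type*} [Group G] (B : G → G) (a b : G) : G := a * B a * b * (B a)⁻¹

theorem IsRotaBaxter.map_circ {G : Type*} [Group G] {B : G → G} (hB : IsRotaBaxter B) (a b : G) :
    B (circ B a b) = B a * B b :=
  (hB a b).symm

theorem Rgen_rel {X : Type*} {mul : X → X → X} {inv B : X → X} {r : X → X → X → Prop}
    (hmul : ∀ {m m' k n n' l}, r m m' k → r n n' l → r (mul m n) (mul m' n') (mul k l))
    (hinv : ∀ {m m' k}, r m m' k → r (inv m) (inv m') (inv k))
    (hB : ∀ {m m' k}, r m m' k → r (B m) (B m') (B k))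
    {m m' k n n' l : X} (hm : r m m' k) (hn : r n n' l) :
    let R := Rgen mul inv B
    r (R (m, n)).1 (R (m', n')).1 (R (k, l)).1 ∧ r (R (m, n)).2 (R (m', n')).2 (R (k, l)).2 := by
  have hc := hmul (hmul (hB hm) hn) (hinv (hB hm))
  have hd := hmul (hinv (hB hc)) (hinv hc)
  exact ⟨hc, hmul (hmul hd hm) (hinv hd)⟩

section CrossedModule

variable {H G : Type*} [Group H] [Group G] {t : H → G} {Φ : G → H → H} {B₁ : H → H} {B₀ : G → G}

/-- The target `𝔱(a, p) = t(p) · a` of a morphism of the category associated with a crossed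
module. -/
def catTarget (t : H → G) (m : G × H) : G := t m.2 * m.1

/-- `IsCatComp t m n k` says that the composite `m ∘ n` is defined and equal to `k`. Keeping the
composite as a third argument turns definedness and value into a single relation, whose
preservation can be chained through the group operations. -/
structure IsCatComp (t : H → G) (m n k : G × H) : Prop where
  target_eq : catTarget t n = m.1
  eq_catComp : k = catComp m n

/-- The label `Φ(B₀(a)⁻¹ · a⁻¹)(p)` to which `B₁` is applied in `Bcal`. In these labels targets and
composites are expressed by circle products. -/
def twist (Φ : G → H → H) (B₀ : G → G) (m : G × H) : H := Φ ((B₀ m.1)⁻¹ * m.1⁻¹) m.2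

namespace IsCrossedModule

theorem t_inv (h : IsCrossedModule t Φ) (p : H) : t p⁻¹ = (t p)⁻¹ :=
  map_inv (MonoidHom.mk' t h.t_mul) p

theorem Φ_map_inv (h : IsCrossedModule t Φ) (a : G) (p : H) : Φ a p⁻¹ = (Φ a p)⁻¹ :=
  map_inv (MonoidHom.mk' (Φ a) (h.Φ_mul_hom a)) p

theorem Φ_t_inv (h : IsCrossedModule t Φ) (p q : H) : Φ (t p)⁻¹ q = p⁻¹ * q * p := by
  rw [← h.t_inv, h.peiffer, inv_inv]

theorem catTarget_sdpMul (h : IsCrossedModule t Φ) (m n : G × H) :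
    catTarget t (sdpMul Φ m n) = catTarget t m * catTarget t n := by
  simp only [catTarget, sdpMul, h.t_mul, h.equivar]
  group

theorem catTarget_sdpInv (h : IsCrossedModule t Φ) (m : G × H) :
    catTarget t (sdpInv Φ m) = (catTarget t m)⁻¹ := by
  simp only [catTarget, sdpInv, h.equivar, h.t_inv]
  group

theorem catTarget_eq_circ (h : IsCrossedModule t Φ) (B₀ : G → G) (m : G × H) :
    catTarget t m = circ B₀ m.1 (t (twist Φ B₀ m)) := by
  simp only [catTarget, circ, twist, h.equivar]
  group

theorem map_catTarget (h : IsCrossedModule t Φ) (hB₀ : IsRotaBaxter B₀)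
    (ht : ∀ p, t (B₁ p) = B₀ (t p)) (m : G × H) :
    B₀ (catTarget t m) = B₀ m.1 * t (B₁ (twist Φ B₀ m)) := by
  rw [h.catTarget_eq_circ B₀, hB₀.map_circ, ht]

theorem catTarget_Bcal (h : IsCrossedModule t Φ) (hB₀ : IsRotaBaxter B₀)
    (ht : ∀ p, t (B₁ p) = B₀ (t p)) (m : G × H) :
    catTarget t (Bcal Φ B₁ B₀ m) = B₀ (catTarget t m) := calc
  t (Φ (B₀ m.1) (B₁ (twist Φ B₀ m))) * B₀ m.1 = B₀ m.1 * t (B₁ (twist Φ B₀ m)) := by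
    rw [h.equivar, inv_mul_cancel_right]
  _ = B₀ (catTarget t m) := (h.map_catTarget hB₀ ht m).symm

end IsCrossedModule

namespace IsCatComp

theorem map_sdpMul (h : IsCrossedModule t Φ) {m m' k n n' l : G × H}
    (hm : IsCatComp t m m' k) (hn : IsCatComp t n n' l) :
    IsCatComp t (sdpMul Φ m n) (sdpMul Φ m' n') (sdpMul Φ k l) where
  target_eq := by
    rw [h.catTarget_sdpMul, hm.target_eq, hn.target_eq, sdpMul]
  eq_catComp := by
    have conj_action : Φ m.1 n.2 = m'.2 * Φ m'.1 n.2 * m'.2⁻¹ := by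
      rw [← hm.target_eq, catTarget, h.Φ_mul, h.peiffer]
    rw [hm.eq_catComp, hn.eq_catComp]
    refine Prod.ext rfl ?_
    calc
      m.2 * m'.2 * Φ m'.1 (n.2 * n'.2) = m.2 * m'.2 * (Φ m'.1 n.2 * Φ m'.1 n'.2) := by
        rw [h.Φ_mul_hom]
      _ = m.2 * Φ m.1 n.2 * (m'.2 * Φ m'.1 n'.2) := by
        rw [conj_action]
        group

theorem map_sdpInv (h : IsCrossedModule t Φ) {m m' k : G × H} (hm : IsCatComp t m m' k) :
    IsCatComp t (sdpInv Φ m) (sdpInv Φ m') (sdpInv Φ k) where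
  target_eq := by
    rw [h.catTarget_sdpInv, hm.target_eq, sdpInv]
  eq_catComp := by
    have conj_action : Φ m.1⁻¹ m.2⁻¹ = Φ m'.1⁻¹ (m'.2⁻¹ * m.2⁻¹ * m'.2) := by
      rw [← hm.target_eq, catTarget, mul_inv_rev, h.Φ_mul, h.Φ_t_inv]
    rw [hm.eq_catComp]
    refine Prod.ext rfl ?_
    calc
      Φ m'.1⁻¹ (m.2 * m'.2)⁻¹ = Φ m'.1⁻¹ (m'.2⁻¹ * m.2⁻¹ * m'.2 * m'.2⁻¹) := by group
      _ = Φ m.1⁻¹ m.2⁻¹ * Φ m'.1⁻¹ m'.2⁻¹ := by rw [h.Φ_mul_hom, conj_action]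

theorem twist_eq_circ (h : IsCrossedModule t Φ) (hB₀ : IsRotaBaxter B₀)
    (ht : ∀ p, t (B₁ p) = B₀ (t p)) {m m' k : G × H} (hm : IsCatComp t m m' k) :
    twist Φ B₀ k = circ B₁ (twist Φ B₀ m') (twist Φ B₀ m) := by
  set u := twist Φ B₀ m' with hu
  set c := (B₀ m'.1)⁻¹ * m'.1⁻¹ with hc
  have twist_left : twist Φ B₀ m = (B₁ u)⁻¹ * (u⁻¹ * Φ c m.2 * u) * B₁ u := calc
    twist Φ B₀ m = Φ ((t (B₁ u))⁻¹ * (c * (t m'.2)⁻¹)) m.2 := by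
      rw [twist, ← hm.target_eq, h.map_catTarget hB₀ ht, ← hu, catTarget, hc]
      group
    _ = (B₁ u)⁻¹ * Φ c (m'.2⁻¹ * m.2 * m'.2) * B₁ u := by
      rw [h.Φ_mul, h.Φ_mul c, h.Φ_t_inv, h.Φ_t_inv]
    _ = (B₁ u)⁻¹ * (u⁻¹ * Φ c m.2 * u) * B₁ u := by
      rw [h.Φ_mul_hom, h.Φ_mul_hom, h.Φ_map_inv, hu, twist]
  calc
    twist Φ B₀ k = Φ c m.2 * u := by rw [hm.eq_catComp, twist, catComp, h.Φ_mul_hom, hu, twist]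
    _ = circ B₁ u (twist Φ B₀ m) := by
      rw [twist_left, circ]
      group

theorem map_Bcal (h : IsCrossedModule t Φ) (hB₁ : IsRotaBaxter B₁) (hB₀ : IsRotaBaxter B₀)
    (ht : ∀ p, t (B₁ p) = B₀ (t p)) {m m' k : G × H} (hm : IsCatComp t m m' k) :
    IsCatComp t (Bcal Φ B₁ B₀ m) (Bcal Φ B₁ B₀ m') (Bcal Φ B₁ B₀ k) where
  target_eq := by
    rw [h.catTarget_Bcal hB₀ ht, hm.target_eq, Bcal]
  eq_catComp := by
    have source_eq : k.1 = m'.1 := by rw [hm.eq_catComp, catComp]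
    refine Prod.ext (congrArg B₀ source_eq) ?_
    set u := B₁ (twist Φ B₀ m)
    set u' := B₁ (twist Φ B₀ m')
    have conj_action : Φ (B₀ m.1) u = Φ (B₀ m'.1) (u' * u * u'⁻¹) := by
      rw [← hm.target_eq, h.map_catTarget hB₀ ht, h.Φ_mul, h.peiffer]
    calc
      Φ (B₀ k.1) (B₁ (twist Φ B₀ k)) = Φ (B₀ m'.1) (u' * u) := by
        rw [source_eq, hm.twist_eq_circ h hB₀ ht, hB₁.map_circ]
      _ = Φ (B₀ m.1) u * Φ (B₀ m'.1) u' := by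
        rw [conj_action, ← h.Φ_mul_hom, inv_mul_cancel_right]

end IsCatComp

theorem stmt11_general (h : IsCrossedModule t Φ) (hB₁ : IsRotaBaxter B₁) (hB₀ : IsRotaBaxter B₀)
    (ht : ∀ p, t (B₁ p) = B₀ (t p)) {m m' k n n' l : G × H}
    (hm : IsCatComp t m m' k) (hn : IsCatComp t n n' l) :
    let R := Rgen (sdpMul Φ) (sdpInv Φ) (Bcal Φ B₁ B₀)
    IsCatComp t (R (m, n)).1 (R (m', n')).1 (R (k, l)).1 ∧
      IsCatComp t (R (m, n)).2 (R (m', n')).2 (R (k, l)).2 :=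
  Rgen_rel (IsCatComp.map_sdpMul h) (IsCatComp.map_sdpInv h) (IsCatComp.map_Bcal h hB₁ hB₀ ht)
    hm hn

end CrossedModule

theorem stmt11 {H G : Type*} [Group H] [Group G] (t : H → G) (Φ : G → H → H)
    (B₁ : H → H) (B₀ : G → G) (hcm : IsCrossedModule t Φ)
    (hrb : IsCMRotaBaxter t Φ B₁ B₀)
    (e f e' f' : G) (x y x' y' : H)
    (h₁ : t x' * e' = e) (h₂ : t y' * f' = f) :
    -- the composite of the first components is defined: 𝔱(m₁') = 𝔰(m₁)
    (t (Rgen (sdpMul Φ) (sdpInv Φ) (Bcal Φ B₁ B₀) ((e', x'), (f', y'))).1.2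
        * (Rgen (sdpMul Φ) (sdpInv Φ) (Bcal Φ B₁ B₀) ((e', x'), (f', y'))).1.1
      = (Rgen (sdpMul Φ) (sdpInv Φ) (Bcal Φ B₁ B₀) ((e, x), (f, y))).1.1) ∧
    -- the composite of the second components is defined: 𝔱(m₂') = 𝔰(m₂)
    (t (Rgen (sdpMul Φ) (sdpInv Φ) (Bcal Φ B₁ B₀) ((e', x'), (f', y'))).2.2
        * (Rgen (sdpMul Φ) (sdpInv Φ) (Bcal Φ B₁ B₀) ((e', x'), (f', y'))).2.1
      = (Rgen (sdpMul Φ) (sdpInv Φ) (Bcal Φ B₁ B₀) ((e, x), (f, y))).2.1) ∧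
    -- R₁ is compatible with composition
    Rgen (sdpMul Φ) (sdpInv Φ) (Bcal Φ B₁ B₀)
        (catComp (e, x) (e', x'), catComp (f, y) (f', y'))
      = (catComp (Rgen (sdpMul Φ) (sdpInv Φ) (Bcal Φ B₁ B₀) ((e, x), (f, y))).1
            (Rgen (sdpMul Φ) (sdpInv Φ) (Bcal Φ B₁ B₀) ((e', x'), (f', y'))).1,
         catComp (Rgen (sdpMul Φ) (sdpInv Φ) (Bcal Φ B₁ B₀) ((e, x), (f, y))).2
            (Rgen (sdpMul Φ) (sdpInv Φ) (Bcal Φ B₁ B₀) ((e', x'), (f', y'))).2) := by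
  obtain ⟨hc, hd⟩ := stmt11_general hcm hrb.rb₁ hrb.rb₀ hrb.t_comm (m := (e, x)) (m' := (e', x'))
    (n := (f, y)) (n' := (f', y')) ⟨h₁, rfl⟩ ⟨h₂, rfl⟩
  exact ⟨hc.target_eq, hd.target_eq, Prod.ext hc.eq_catComp hd.eq_catComp⟩
end

section
/- Let (B₁, B₀) be a Rota-Baxter operator on a crossed module of Lie algebras (h, g, dt, φ) over ℝ. Define [u, v]_{B₁} = [B₁(u), v] + [u, B₁(v)] + [u, v] on h, [x, y]_{B₀} = [B₀(x), y] + [x, B₀(y)] + [x, y] on g, and φ̂(x)(u) = φ(x)(B₁(u)) + φ(B₀(x))(u) + φ(x)(u). Then for all x ∈ g and u, v ∈ h: (1) dt([u, v]_{B₁}) = [dt(u), dt(v)]_{B₀}; (2) φ̂(dt(u))(v) = [u, v]_{B₁}; (3) dt(φ̂(x)(u)) = [x, dt(u)]_{B₀}. -/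
/-- A crossed module of Lie algebras over ℝ: `dt : h → g` a Lie algebra homomorphism and
`φ : g → Der(h)` a Lie algebra homomorphism into derivations, with equivariance and the
Peiffer identity. -/
structure IsLieCrossedModule {h g : Type*}
    [LieRing h] [LieAlgebra ℝ h] [LieRing g] [LieAlgebra ℝ g]
    (dt : h →ₗ[ℝ] g) (φ : g →ₗ[ℝ] Module.End ℝ h) : Prop where
  dt_bracket : ∀ u v : h, dt ⁅u, v⁆ = ⁅dt u, dt v⁆
  φ_deriv : ∀ (x : g) (u v : h), φ x ⁅u, v⁆ = ⁅φ x u, v⁆ + ⁅u, φ x v⁆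
  φ_hom : ∀ (x y : g) (u : h), φ ⁅x, y⁆ u = φ x (φ y u) - φ y (φ x u)
  equivar : ∀ (x : g) (u : h), dt (φ x u) = ⁅x, dt u⁆
  peiffer : ∀ u v : h, φ (dt u) v = ⁅u, v⁆

/-- Rota-Baxter operator of weight 1 on a Lie algebra. -/
def IsRotaBaxterLie {g : Type*} [LieRing g] [LieAlgebra ℝ g] (B : g →ₗ[ℝ] g) : Prop :=
  ∀ x y : g, ⁅B x, B y⁆ = B (⁅B x, y⁆ + ⁅x, B y⁆ + ⁅x, y⁆)

/-- Rota-Baxter operator on a crossed module of Lie algebras. -/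
structure IsLieCMRotaBaxter {h g : Type*}
    [LieRing h] [LieAlgebra ℝ h] [LieRing g] [LieAlgebra ℝ g]
    (dt : h →ₗ[ℝ] g) (φ : g →ₗ[ℝ] Module.End ℝ h)
    (B₁ : h →ₗ[ℝ] h) (B₀ : g →ₗ[ℝ] g) : Prop where
  rb₁ : IsRotaBaxterLie B₁
  rb₀ : IsRotaBaxterLie B₀
  comm : ∀ u : h, dt (B₁ u) = B₀ (dt u)
  compat : ∀ (x : g) (u : h),
    φ (B₀ x) (B₁ u) = B₁ (φ x (B₁ u) + φ (B₀ x) u + φ x u)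

/-- The descended bracket `[u,v]_B = [B u, v] + [u, B v] + [u, v]`. -/
def brB {l : Type*} [LieRing l] [LieAlgebra ℝ l] (B : l →ₗ[ℝ] l) (u v : l) : l :=
  ⁅B u, v⁆ + ⁅u, B v⁆ + ⁅u, v⁆

/-- The descended action `φ̂(x)(u) = φ(x)(B₁ u) + φ(B₀ x)(u) + φ(x)(u)`. -/
def hatphiL {h g : Type*} [LieRing h] [LieAlgebra ℝ h] [LieRing g] [LieAlgebra ℝ g]
    (φ : g →ₗ[ℝ] Module.End ℝ h) (B₁ : h →ₗ[ℝ] h) (B₀ : g →ₗ[ℝ] g)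
    (x : g) (u : h) : h :=
  φ x (B₁ u) + φ (B₀ x) u + φ x u

/-!
The descended bracket and the descended action are one construction applied to two pairings, the
Lie bracket and the action `φ`. This construction is natural: a map compatible with two pairings and
with the operators on their arguments is compatible with the descended pairings. The Peiffer
identity and the equivariance of `dt` are compatibilities of this kind, so both descend. Together
they force `dt` to preserve brackets, since `dt [u, v] = dt (φ (dt u) v) = [dt u, dt v]`, and the
same computation applies after descending.
-/

section Descendent

variable {X Y Z X' Y' Z' : Type*}

/-- The pairing `(x, y) ↦ β (A x) y + β x (B y) + β x y` descended from `β` along operators `A`, `B`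
of weight 1 on its two arguments. It covers both the descended bracket and the descended action;
`A`, `B` and `β` are plain functions because only the values of `β` are added. -/
def descendent [Add Z] (A : X → X) (B : Y → Y) (β : X → Y → Z) (x : X) (y : Y) : Z :=
  β (A x) y + β x (B y) + β x y

theorem map_descendent [Add Z] [Add Z'] {F : Type*} [FunLike F Z Z'] [AddHomClass F Z Z'] (f : F)
    {a : X → X'} {b : Y → Y'} {A : X → X} {A' : X' → X'} {B : Y → Y} {B' : Y' → Y'}
    {β : X → Y → Z} {β' : X' → Y' → Z'}
    (hA : Function.Semiconj a A A') (hB : Function.Semiconj b B B')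
    (hβ : ∀ x y, f (β x y) = β' (a x) (b y)) (x : X) (y : Y) :
    f (descendent A B β x y) = descendent A' B' β' (a x) (b y) := by
  simp only [descendent, map_add, hβ, hA.eq, hB.eq]

end Descendent

theorem brB_eq_descendent {l : Type*} [LieRing l] [LieAlgebra ℝ l] (B : l →ₗ[ℝ] l) (u v : l) :
    brB B u v = descendent B B Bracket.bracket u v :=
  rfl

theorem hatphiL_eq_descendent {h g : Type*} [LieRing h] [LieAlgebra ℝ h] [LieRing g]
    [LieAlgebra ℝ g] (φ : g →ₗ[ℝ] Module.End ℝ h) (B₁ : h →ₗ[ℝ] h) (B₀ : g →ₗ[ℝ] g)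
    (x : g) (u : h) :
    hatphiL φ B₁ B₀ x u = descendent B₀ B₁ (fun x u => φ x u) x u :=
  congrArg (· + φ x u) (add_comm _ _)

theorem stmt16_general {h g F : Type*} [LieRing h] [LieRing g] [FunLike F h g] [AddHomClass F h g]
    (dt : F) (φ : g → h → h) (equivar : ∀ (x : g) (u : h), dt (φ x u) = ⁅x, dt u⁆)
    (peiffer : ∀ u v : h, φ (dt u) v = ⁅u, v⁆) (B₁ : h → h) (B₀ : g → g)
    (comm : Function.Semiconj dt B₁ B₀) :
    (∀ u v : h, dt (descendent B₁ B₁ Bracket.bracket u v) =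
      descendent B₀ B₀ Bracket.bracket (dt u) (dt v)) ∧
    (∀ u v : h, descendent B₀ B₁ φ (dt u) v = descendent B₁ B₁ Bracket.bracket u v) ∧
    (∀ (x : g) (u : h), dt (descendent B₀ B₁ φ x u) =
      descendent B₀ B₀ Bracket.bracket x (dt u)) := by
  have descended_peiffer (u v : h) :
      descendent B₀ B₁ φ (dt u) v = descendent B₁ B₁ Bracket.bracket u v :=
    (map_descendent (AddHom.id h) comm .id_left (fun u v => (peiffer u v).symm) u v).symm
  have descended_equivar (x : g) (u : h) :
      dt (descendent B₀ B₁ φ x u) = descendent B₀ B₀ Bracket.bracket x (dt u) :=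
    map_descendent dt .id_left comm equivar x u
  refine ⟨fun u v => ?_, descended_peiffer, descended_equivar⟩
  rw [← descended_peiffer, descended_equivar]

theorem stmt16 {h g : Type*}
    [LieRing h] [LieAlgebra ℝ h] [LieRing g] [LieAlgebra ℝ g]
    (dt : h →ₗ[ℝ] g) (φ : g →ₗ[ℝ] Module.End ℝ h)
    (hcm : IsLieCrossedModule dt φ) (B₁ : h →ₗ[ℝ] h) (B₀ : g →ₗ[ℝ] g)
    (hrb : IsLieCMRotaBaxter dt φ B₁ B₀) :
    -- (1) dt is a homomorphism for the descended brackets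
    (∀ u v : h, dt (brB B₁ u v) = brB B₀ (dt u) (dt v)) ∧
    -- (2) Peiffer identity for the descended structures
    (∀ u v : h, hatphiL φ B₁ B₀ (dt u) v = brB B₁ u v) ∧
    -- (3) equivariance for the descended structures
    (∀ (x : g) (u : h), dt (hatphiL φ B₁ B₀ x u) = brB B₀ x (dt u)) := by
  simpa only [brB_eq_descendent, hatphiL_eq_descendent] using
    stmt16_general dt (fun x u => φ x u) hcm.equivar hcm.peiffer B₁ B₀ hrb.comm
end
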